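/- Let F be an algebraically closed field with characteristic ≠ 2. Then the automorphism group of the algebra E6 with MSC [[0,0,0,1],[0,0,0,0]] is Aut(E6) = { [[t²,s],[0,t]] : t ∈ F, t ≠ 0, s ∈ F }. -/

import Mathlib

open Matrix Kronecker

variable {F : Type*}

/-- The Kronecker (tensor) product of two `2 × 2` matrices, realized as a `4 × 4` matrix;
rows/columns are indexed in row-major order by the pairs `(1,1), (1,2), (2,1), (2,2)`. -/
def kron [CommRing F] (g h : Matrix (Fin 2) (Fin 2) F) : Matrix (Fin 4) (Fin 4) F :=
  Matrix.reindex finProdFinEquiv finProdFinEquiv (g ⊗ₖ h)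

/-- Two `2`-dimensional algebras given by matrices of structure constants `A, B`
are isomorphic iff `B = g · A · (g⁻¹ ⊗ g⁻¹)` for some `g ∈ GL(2, F)`. -/
def Isomorphic [Field F] (A B : Matrix (Fin 2) (Fin 4) F) : Prop :=
  ∃ g : GL (Fin 2) F,
    B = (g : Matrix (Fin 2) (Fin 2) F) * A *
        kron ((↑(g⁻¹) : Matrix (Fin 2) (Fin 2) F)) ((↑(g⁻¹) : Matrix (Fin 2) (Fin 2) F))

/-- The automorphism group of the algebra with MSC `E`, as a set of (invertible) `2 × 2`
matrices: `Aut(E) = {g ∈ GL(2,F) : g·E = E·(g ⊗ g)}`. -/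
def Aut [Field F] (E : Matrix (Fin 2) (Fin 4) F) : Set (Matrix (Fin 2) (Fin 2) F) :=
  {g | IsUnit g ∧ g * E = E * kron g g}

/-- The derivation algebra of the algebra with MSC `E`:
`Der(E) = { D : E·(D ⊗ I + I ⊗ D) = D·E }`. -/
def Der [Field F] (E : Matrix (Fin 2) (Fin 4) F) : Set (Matrix (Fin 2) (Fin 2) F) :=
  {D | E * (kron D 1 + kron 1 D) = D * E}

/-- The algebra `E₆` over `R`, by its structure constants: in the standard basis `e₁, e₂` the only
nonzero product of basis vectors is `e₂ · e₂ = e₁`. -/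
def E6 (R : Type*) [Zero R] [One R] : Matrix (Fin 2) (Fin 4) R :=
  !![0, 0, 0, 1; 0, 0, 0, 0]

section NonAssocSemiring

variable {R : Type*} [NonAssocSemiring R]

theorem mul_E6 {m : Type*} (M : Matrix m (Fin 2) R) :
    M * E6 R = of fun i => ![0, 0, 0, M i 0] := by
  ext i j
  fin_cases j <;> simp [E6, mul_apply]

theorem E6_mul {n : Type*} (M : Matrix (Fin 4) n R) : E6 R * M = of ![M 3, 0] := by
  ext i j
  fin_cases i <;> simp [E6, mul_apply, Fin.sum_univ_four]

end NonAssocSemiring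

section CommRing

variable {R : Type*} [CommRing R]

theorem kron_last_row (g h : Matrix (Fin 2) (Fin 2) R) :
    kron g h 3 = ![g 1 0 * h 1 0, g 1 0 * h 1 1, g 1 1 * h 1 0, g 1 1 * h 1 1] := by
  ext j
  fin_cases j <;> rfl

theorem mul_E6_eq_E6_mul_kron_iff {g : Matrix (Fin 2) (Fin 2) R} :
    g * E6 R = E6 R * kron g g ↔ g 0 0 = g 1 1 ^ 2 ∧ g 1 0 = 0 := by
  rw [mul_E6, E6_mul, kron_last_row]
  constructor
  · intro h
    have h_top : g 0 0 = g 1 1 * g 1 1 := congr_fun₂ h 0 3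
    have h_bot : g 1 0 = 0 := congr_fun₂ h 1 3
    exact ⟨h_top.trans (sq _).symm, h_bot⟩
  · rintro ⟨h_top, h_bot⟩
    ext i j
    fin_cases i <;> fin_cases j <;> simp [h_top, h_bot, sq]

theorem isUnit_sq_upperTriangular_iff {t s : R} : IsUnit !![t ^ 2, s; 0, t] ↔ IsUnit t := by
  have h_det : det !![t ^ 2, s; 0, t] = t ^ 3 := by
    rw [det_fin_two_of]
    ring
  rw [isUnit_iff_isUnit_det, h_det, isUnit_pow_iff three_ne_zero]

end CommRing

theorem aut_E6_general (R : Type*) [CommRing R] :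
    {g : Matrix (Fin 2) (Fin 2) R | IsUnit g ∧ g * E6 R = E6 R * kron g g} =
      {g | ∃ t s : R, IsUnit t ∧ g = !![t ^ 2, s; 0, t]} := by
  ext g
  constructor
  · rintro ⟨h_unit, h_mul⟩
    obtain ⟨h_top, h_bot⟩ := mul_E6_eq_E6_mul_kron_iff.mp h_mul
    have h_form : g = !![g 1 1 ^ 2, g 0 1; 0, g 1 1] := by
      rw [← h_top, ← h_bot]
      exact eta_fin_two g
    exact ⟨g 1 1, g 0 1, isUnit_sq_upperTriangular_iff.mp (h_form ▸ h_unit), h_form⟩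
  · rintro ⟨t, s, ht, rfl⟩
    exact ⟨isUnit_sq_upperTriangular_iff.mpr ht, mul_E6_eq_E6_mul_kron_iff.mpr ⟨rfl, rfl⟩⟩

theorem aut_E6 (F : Type*) [Field F] [IsAlgClosed F] (hchar : ringChar F ≠ 2) :
    Aut (!![0, 0, 0, 1; 0, 0, 0, 0] : Matrix (Fin 2) (Fin 4) F) =
      {g | ∃ t s : F, t ≠ 0 ∧ g = !![t ^ 2, s; 0, t]} := by
  simp only [← isUnit_iff_ne_zero]
  exact aut_E6_general F
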